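/- arXiv:1504.04069 — 2 statements merged into one kernel-verified Lean document; each statement's English description precedes it below -/
import Mathlib

section
/- Let G be a finite simple graph with a perfect ordering B_1,…,B_k of its prime components, with separators S_j := (B_1 ∪ ⋯ ∪ B_{j−1}) ∩ B_j, and set s := max_{1≤j≤k} |S_j|. Let f : ℝ → ℝ with f(0) = 0. If f[−] preserves positivity on P_{G_{B_i}} for all 1 ≤ i ≤ k, and f[−] is Loewner super-additive on P_{K_s}(ℝ), then f[−] preserves positivity on P_G. -/
open Set Matrix

noncomputable section

/-- Entrywise power function `x ↦ x^α` on nonnegative reals, with the convention `0^α := 0`. -/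
def powEnt (α x : ℝ) : ℝ := if x = 0 then 0 else x ^ α

/-- The odd extension `ψ_α(x) = sgn(x)|x|^α` of the power function, with `ψ_α(0) = 0`. -/
def psiF (α x : ℝ) : ℝ := Real.sign x * |x| ^ α

/-- The even extension `φ_α(x) = |x|^α` of the power function, with `φ_α(0) = 0`. -/
def phiF (α x : ℝ) : ℝ := if x = 0 then 0 else |x| ^ α

/-- `P_G(I)`: positive semidefinite matrices with entries in `I` and zeros outside
the edge pattern of `G`. -/
def PsetG {V : Type*} [Fintype V] (G : SimpleGraph V) (I : Set ℝ) :
    Set (Matrix V V ℝ) :=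
  {A | A.PosSemidef ∧ (∀ i j, A i j ∈ I) ∧ ∀ i j, i ≠ j → ¬ G.Adj i j → A i j = 0}

/-- `H_G`: the set of entrywise powers preserving `P_G([0,∞))`. -/
def HsetG {V : Type*} [Fintype V] (G : SimpleGraph V) : Set ℝ :=
  {α | ∀ A ∈ PsetG G (Ici (0 : ℝ)), A.map (powEnt α) ∈ PsetG G univ}

/-- `H_G^ψ`: the set of powers `α` such that `ψ_α` preserves `P_G(ℝ)`. -/
def HsetPsi {V : Type*} [Fintype V] (G : SimpleGraph V) : Set ℝ :=
  {α | ∀ A ∈ PsetG G univ, A.map (psiF α) ∈ PsetG G univ}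

/-- `H_G^φ`: the set of powers `α` such that `φ_α` preserves `P_G(ℝ)`. -/
def HsetPhi {V : Type*} [Fintype V] (G : SimpleGraph V) : Set ℝ :=
  {α | ∀ A ∈ PsetG G univ, A.map (phiF α) ∈ PsetG G univ}

/-- The set of which the critical exponent is the least element:
all `α` such that every `β ≥ α` lies in `H`. -/
def CEset (H : Set ℝ) : Set ℝ := {α | ∀ β, α ≤ β → β ∈ H}

/-- The positive integers, as a set of reals. -/
def posNats : Set ℝ := {x | ∃ k : ℕ, 0 < k ∧ x = k}

/-- The odd positive integers `−1+2ℕ`, as a set of reals. -/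
def oddNats : Set ℝ := {x | ∃ k : ℕ, 0 < k ∧ x = 2 * k - 1}

/-- The even positive integers `2ℕ`, as a set of reals. -/
def evenNats : Set ℝ := {x | ∃ k : ℕ, 0 < k ∧ x = 2 * k}

/-- A decomposition `(A,C,B)` of a graph `G`: a partition of the vertices such that `C`
separates `A` from `B` (every walk from `A` to `B` meets `C`) and `C` induces a complete
subgraph. -/
def IsDecomposition {V : Type*} (G : SimpleGraph V) (A C B : Set V) : Prop :=
  (∀ v, v ∈ A ∨ v ∈ C ∨ v ∈ B) ∧
  Disjoint A C ∧ Disjoint A B ∧ Disjoint C B ∧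
  (∀ a ∈ A, ∀ b ∈ B, ∀ p : G.Walk a b, ∃ c ∈ C, c ∈ p.support) ∧
  (∀ c₁ ∈ C, ∀ c₂ ∈ C, c₁ ≠ c₂ → G.Adj c₁ c₂)

/-- `P_{G_S}` for a subset `S` of the vertices, identified with full-size matrices by padding
with zeros: positive semidefinite matrices supported on `S × S` whose zero pattern respects
the (induced subgraph of the) graph `G`. -/
def PsetSub {V : Type*} [Fintype V] (G : SimpleGraph V) (S : Set V) :
    Set (Matrix V V ℝ) :=
  {M | M.PosSemidef ∧ (∀ i j, (i ∉ S ∨ j ∉ S) → M i j = 0) ∧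
    ∀ i j, i ≠ j → ¬ G.Adj i j → M i j = 0}

/-- A graph is prime if it admits no (proper) decomposition. -/
def IsPrimeGraph {V : Type*} (G : SimpleGraph V) : Prop :=
  ∀ A C B : Set V, IsDecomposition G A C B → A = ∅ ∨ B = ∅

/-!
Write a matrix of `P_G` as a Gram matrix. If `U` and `W` cover the vertices and no edge joins
`U \ W` to `W \ U`, the vectors of `U \ W` are orthogonal to those of `W \ U`; projecting all
vectors onto the span of the former and onto its orthogonal complement writes the matrix as
`M + N` with `M` supported on `U` and `N` on `W`, and both summands respect `G` because `U ∩ W` is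
a clique. Then `f[M + N]` is the sum of `f[M]`, `f[N]` and the defect `f[M + N] - f[M] - f[N]`,
which is supported on the separator `U ∩ W`, where super-additivity applies. A perfect ordering
allows the pieces `B_i` to be glued on one at a time in this way: an edge between `B_i` and the
earlier pieces lies in some `B_l`, and if `l > i` it lies in `S_l`, hence in an earlier `B_j`;
descending, it lies in a piece with index at most `i`.
-/

section Gram

open scoped ComplexOrder

variable {𝕜 n : Type*} [RCLike 𝕜]

lemma exists_eq_gram_of_posSemidef [Finite n] {M : Matrix n n 𝕜} (hM : M.PosSemidef) :
    ∃ (m : ℕ) (w : n → EuclideanSpace 𝕜 (Fin m)), M = gram 𝕜 w := by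
  obtain ⟨m, v, rfl⟩ := posSemidef_iff_eq_sum_vecMulVec.mp hM
  refine ⟨m, fun i => WithLp.toLp 2 fun l => star (v l i), ?_⟩
  ext i j
  simp [Matrix.sum_apply, vecMulVec_apply, gram_apply, PiLp.inner_apply, mul_comm]

lemma gram_eq_gram_starProjection_add_gram_starProjection_orthogonal {E : Type*}
    [NormedAddCommGroup E] [InnerProductSpace 𝕜 E] (L : Submodule 𝕜 E) [L.HasOrthogonalProjection]
    (w : n → E) :
    gram 𝕜 w =
      gram 𝕜 (fun i => L.starProjection (w i)) + gram 𝕜 (fun i => Lᗮ.starProjection (w i)) := by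
  ext i j
  simp only [gram_apply, Matrix.add_apply, Submodule.inner_starProjection_left_eq_right,
    Submodule.starProjection_eq_self_iff.mpr (Submodule.starProjection_apply_mem _ _)]
  rw [← inner_add_right, L.starProjection_add_starProjection_orthogonal]

lemma exists_posSemidef_add_eq_of_forall_eq_zero [Finite n] {M : Matrix n n 𝕜} (hM : M.PosSemidef)
    {U W : Set n} (hUW : ∀ i ∉ W, ∀ j ∉ U, M i j = 0) :
    ∃ M₁ M₂ : Matrix n n 𝕜, M₁.PosSemidef ∧ M₂.PosSemidef ∧ M₁ + M₂ = M ∧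
      (∀ i j, i ∉ U ∨ j ∉ U → M₁ i j = 0) ∧ (∀ i j, i ∉ W ∨ j ∉ W → M₂ i j = 0) := by
  obtain ⟨m, w, rfl⟩ := exists_eq_gram_of_posSemidef hM
  let L := Submodule.span 𝕜 (w '' Wᶜ)
  have hLorth : ∀ i ∉ W, Lᗮ.starProjection (w i) = 0 := fun i hi =>
    (Submodule.starProjection_apply_eq_zero_iff _).mpr <|
      L.le_orthogonal_orthogonal (Submodule.subset_span ⟨i, hi, rfl⟩)
  have hL : ∀ j ∉ U, L.starProjection (w j) = 0 := fun j hj => by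
    have hspan : L ⟂ Submodule.span 𝕜 {w j} := Submodule.isOrtho_span.mpr <| by
      rintro _ ⟨i, hi, rfl⟩ _ rfl
      exact hUW i hi j hj
    exact (Submodule.starProjection_apply_eq_zero_iff _).mpr
      (hspan.symm (Submodule.mem_span_singleton_self _))
  refine ⟨_, _, posSemidef_gram .., posSemidef_gram ..,
    (gram_eq_gram_starProjection_add_gram_starProjection_orthogonal L w).symm, ?_, ?_⟩
  · rintro i j (hi | hj)
    · simp only [gram_apply, hL i hi, inner_zero_left]
    · simp only [gram_apply, hL j hj, inner_zero_right]
  · rintro i j (hi | hj)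
    · simp only [gram_apply, hLorth i hi, inner_zero_left]
    · simp only [gram_apply, hLorth j hj, inner_zero_right]

lemma posSemidef_of_submatrix_of_forall_eq_zero [Finite n] {M : Matrix n n 𝕜} {T : Set n}
    (hM : (M.submatrix (Subtype.val : T → n) Subtype.val).PosSemidef)
    (hT : ∀ i j, i ∉ T ∨ j ∉ T → M i j = 0) : M.PosSemidef := by
  classical
  obtain ⟨m, w, hw⟩ := exists_eq_gram_of_posSemidef hM
  have hgram : M = gram 𝕜 fun i => if hi : i ∈ T then w ⟨i, hi⟩ else 0 := by
    ext i j
    by_cases hi : i ∈ T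
    · by_cases hj : j ∈ T
      · simpa [hi, hj] using congr_fun₂ hw ⟨i, hi⟩ ⟨j, hj⟩
      · simp [hj, hT i j (.inr hj)]
    · simp [hi, hT i j (.inl hi)]
  exact hgram ▸ posSemidef_gram ..

end Gram

section EntrywiseMaps

/-- `f[-]` preserves positivity on the set `P` of matrices. -/
def PreservesPositivityOn {n : Type*} (f : ℝ → ℝ) (P : Set (Matrix n n ℝ)) : Prop :=
  ∀ M ∈ P, (M.map f).PosSemidef

/-- Loewner super-additivity of `f[-]` on all positive semidefinite matrices indexed by `n`, that
is, on `P_{K_n}(ℝ)`. -/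
def LoewnerSuperadditive (f : ℝ → ℝ) (n : Type*) : Prop :=
  ∀ M N : Matrix n n ℝ, M.PosSemidef → N.PosSemidef →
    ((M + N).map f - M.map f - N.map f).PosSemidef

variable {f : ℝ → ℝ}

lemma LoewnerSuperadditive.of_embedding {m n : Type*} (hf : LoewnerSuperadditive f n)
    (e : m ↪ n) : LoewnerSuperadditive f m := by
  intro M N hM hN
  cases isEmpty_or_nonempty m with
  | inl _ =>
    rw [Subsingleton.elim ((M + N).map f - M.map f - N.map f) 0]
    exact .zero
  | inr _ =>
    -- Repeating rows and columns of `M` along a retraction of `e` enlarges it to an `n × n` matrix.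
    let r : n → m := Function.invFun e
    have hre : ∀ i, r (e i) = i := Function.leftInverse_invFun e.injective
    have hdefect := (hf _ _ (hM.submatrix r) (hN.submatrix r)).submatrix e
    convert hdefect using 1
    ext i j
    simp [hre]

lemma LoewnerSuperadditive.of_card_le {m n : Type*} [Fintype m] [Fintype n]
    (hf : LoewnerSuperadditive f n) (hmn : Fintype.card m ≤ Fintype.card n) :
    LoewnerSuperadditive f m :=
  hf.of_embedding (Function.Embedding.nonempty_of_card_le hmn).some

variable {V : Type*} [Fintype V] {G : SimpleGraph V} {U W : Set V}

lemma exists_add_eq_of_mem_psetSub_union {M : Matrix V V ℝ} (hM : M ∈ PsetSub G (U ∪ W))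
    (hclique : G.IsClique (U ∩ W)) (hsep : ∀ u ∈ U \ W, ∀ w ∈ W \ U, ¬ G.Adj u w) :
    ∃ M₁ ∈ PsetSub G U, ∃ M₂ ∈ PsetSub G W, M₁ + M₂ = M := by
  obtain ⟨hM, hsupp, hG⟩ := hM
  have hzero : ∀ i ∉ W, ∀ j ∉ U, M i j = 0 := by
    intro i hiW j hjU
    by_cases hiU : i ∈ U
    · by_cases hjW : j ∈ W
      · exact hG i j (ne_of_mem_of_not_mem hiU hjU) (hsep i ⟨hiU, hiW⟩ j ⟨hjW, hjU⟩)
      · exact hsupp i j (.inr (by simp [hjU, hjW]))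
    · exact hsupp i j (.inl (by simp [hiU, hiW]))
  obtain ⟨M₁, M₂, hM₁, hM₂, rfl, hU, hW⟩ := exists_posSemidef_add_eq_of_forall_eq_zero hM hzero
  have hG₁₂ : ∀ i j, i ≠ j → ¬ G.Adj i j → M₁ i j = 0 ∧ M₂ i j = 0 := by
    intro i j hij hadj
    have hsum : M₁ i j + M₂ i j = 0 := hG i j hij hadj
    by_cases hijU : i ∉ U ∨ j ∉ U
    · exact ⟨hU i j hijU, by linarith [hU i j hijU]⟩
    by_cases hijW : i ∉ W ∨ j ∉ W
    · exact ⟨by linarith [hW i j hijW], hW i j hijW⟩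
    push Not at hijU hijW
    exact absurd (hclique ⟨hijU.1, hijW.1⟩ ⟨hijU.2, hijW.2⟩ hij) hadj
  exact ⟨M₁, ⟨hM₁, hU, fun i j hij h => (hG₁₂ i j hij h).1⟩,
    M₂, ⟨hM₂, hW, fun i j hij h => (hG₁₂ i j hij h).2⟩, rfl⟩

lemma LoewnerSuperadditive.posSemidef_defect (hf : LoewnerSuperadditive f ↥(U ∩ W))
    (hf0 : f 0 = 0) {M N : Matrix V V ℝ} (hM : M ∈ PsetSub G U) (hN : N ∈ PsetSub G W) :
    ((M + N).map f - M.map f - N.map f).PosSemidef := by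
  refine posSemidef_of_submatrix_of_forall_eq_zero (T := U ∩ W)
    (hf _ _ (hM.1.submatrix Subtype.val) (hN.1.submatrix Subtype.val)) fun i j hij => ?_
  by_cases hijU : i ∉ U ∨ j ∉ U
  · simp [hM.2.1 i j hijU, hf0]
  · have hijW : i ∉ W ∨ j ∉ W := by
      simp only [Set.mem_inter_iff] at hij
      tauto
    simp [hN.2.1 i j hijW, hf0]

lemma PreservesPositivityOn.psetSub_union (hU : PreservesPositivityOn f (PsetSub G U))
    (hW : PreservesPositivityOn f (PsetSub G W)) (hf0 : f 0 = 0)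
    (hf : LoewnerSuperadditive f ↥(U ∩ W)) (hclique : G.IsClique (U ∩ W))
    (hsep : ∀ u ∈ U \ W, ∀ w ∈ W \ U, ¬ G.Adj u w) :
    PreservesPositivityOn f (PsetSub G (U ∪ W)) := by
  intro M hM
  obtain ⟨M₁, hM₁, M₂, hM₂, rfl⟩ := exists_add_eq_of_mem_psetSub_union hM hclique hsep
  have hsum : (M₁ + M₂).map f =
      ((M₁ + M₂).map f - M₁.map f - M₂.map f) + M₁.map f + M₂.map f := by abel
  rw [hsum]
  exact ((hf.posSemidef_defect hf0 hM₁ hM₂).add (hU M₁ hM₁)).add (hW M₂ hM₂)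

lemma preservesPositivityOn_psetSub_empty (hf0 : f 0 = 0) :
    PreservesPositivityOn f (PsetSub G ∅) := by
  rintro M ⟨-, hM, -⟩
  have hzero : M.map f = 0 := by
    ext i j
    simp [hM i j (.inl (Set.notMem_empty i)), hf0]
  exact hzero ▸ PosSemidef.zero

end EntrywiseMaps

section PerfectOrdering

variable {ι V : Type*} [Fintype ι] [LinearOrder ι] [DecidableEq V] {B : ι → Finset V} {i : ι}

/-- The separator `S_i = (⋃_{j < i} B_j) ∩ B_i`. -/
def separator (B : ι → Finset V) (i : ι) : Finset V :=
  ((Finset.univ.filter (fun j => j < i)).biUnion B) ∩ B i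

lemma mem_separator {v : V} : v ∈ separator B i ↔ (∃ j < i, v ∈ B j) ∧ v ∈ B i := by
  simp [separator]

/-- The family `B` of vertex sets is perfectly ordered: it covers the vertices and edges of `G`, and
each separator but the first is contained in an earlier member, and all separators are cliques. The
members are arbitrary vertex sets rather than prime components, and `j < i` in
`exists_separator_subset` says that `i` is not the first index. -/
structure IsPerfectOrdering (G : SimpleGraph V) (B : ι → Finset V) : Prop where
  exists_mem (v : V) : ∃ i, v ∈ B i
  exists_mem_of_adj (u v : V) : G.Adj u v → ∃ i, u ∈ B i ∧ v ∈ B i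
  exists_separator_subset (i j : ι) : j < i → ∃ l < i, separator B i ⊆ B l
  isClique_separator (i : ι) : G.IsClique (separator B i : Set V)

namespace IsPerfectOrdering

variable {G : SimpleGraph V}

lemma exists_le_subset (h : IsPerfectOrdering G B) {T : Finset V} {l : ι} (hTl : T ⊆ B l)
    (hT : ∀ v ∈ T, ∃ j ≤ i, v ∈ B j) : ∃ j ≤ i, T ⊆ B j := by
  induction l using WellFoundedLT.induction with
  | ind l ih =>
    rcases le_or_gt l i with hli | hil
    · exact ⟨l, hli, hTl⟩
    · obtain ⟨j, hjl, hsub⟩ := h.exists_separator_subset l i hil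
      have hTsep : T ⊆ separator B l := fun v hv =>
        have ⟨a, hai, hva⟩ := hT v hv
        mem_separator.mpr ⟨⟨a, hai.trans_lt hil, hva⟩, hTl hv⟩
      exact ih j hjl (hTsep.trans hsub)

lemma not_adj (h : IsPerfectOrdering G B) {u w : V} (hu : ∃ j < i, u ∈ B j) (hui : u ∉ B i)
    (hw : w ∈ B i) (hwi : ¬ ∃ j < i, w ∈ B j) : ¬ G.Adj u w := by
  intro hadj
  obtain ⟨j, hji, huj⟩ := hu
  obtain ⟨l, hul, hwl⟩ := h.exists_mem_of_adj u w hadj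
  obtain ⟨a, hai, hsub⟩ := h.exists_le_subset (i := i) (T := {u, w}) (l := l)
    (by simp [Finset.insert_subset_iff, hul, hwl])
    (by simpa using ⟨⟨j, hji.le, huj⟩, ⟨i, le_rfl, hw⟩⟩)
  have hua : u ∈ B a := hsub (by simp)
  have hwa : w ∈ B a := hsub (by simp)
  exact hwi ⟨a, hai.lt_of_ne (by rintro rfl; exact hui hua), hwa⟩

variable [Fintype V] {f : ℝ → ℝ}

lemma preservesPositivityOn_biUnion_union (h : IsPerfectOrdering G B) (hf0 : f 0 = 0)
    (hf : LoewnerSuperadditive f (separator B i))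
    (hlt : PreservesPositivityOn f
      (PsetSub G ((Finset.univ.filter (fun j => j < i)).biUnion B : Finset V)))
    (hi : PreservesPositivityOn f (PsetSub G (B i))) :
    PreservesPositivityOn f
      (PsetSub G ((Finset.univ.filter (fun j => j < i)).biUnion B ∪ B i : Set V)) := by
  refine hlt.psetSub_union hi hf0 ?_ ?_ fun u hu w hw => ?_
  · rw [← Finset.coe_inter]
    exact hf
  · rw [← Finset.coe_inter]
    exact h.isClique_separator i
  · exact h.not_adj (by simpa using hu.1) hu.2 hw.1 (by simpa using hw.2)

lemma preservesPositivityOn_biUnion (h : IsPerfectOrdering G B) (hf0 : f 0 = 0)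
    (hpres : ∀ i, PreservesPositivityOn f (PsetSub G (B i)))
    (hf : ∀ i, LoewnerSuperadditive f (separator B i)) (J : Finset ι)
    (hJ : IsLowerSet (J : Set ι)) : PreservesPositivityOn f (PsetSub G (J.biUnion B)) := by
  induction J using Finset.induction_on_max with
  | empty => simpa using preservesPositivityOn_psetSub_empty hf0
  | insert i J hlt ih =>
    have hJi : J = Finset.univ.filter (fun j => j < i) := by
      ext j
      have hmem (hj : j < i) : j ∈ J :=
        (Finset.mem_insert.mp (hJ hj.le (Finset.mem_insert_self i J))).resolve_left hj.ne
      simpa using ⟨hlt j, hmem⟩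
    have hJlower : IsLowerSet (J : Set ι) := by
      intro a b hba ha
      simpa [hJi] using hba.trans_lt (hlt a ha)
    rw [Finset.biUnion_insert, Finset.union_comm, Finset.coe_union, hJi]
    exact h.preservesPositivityOn_biUnion_union hf0 (hf i) (hJi ▸ ih hJlower) (hpres i)

end IsPerfectOrdering

theorem prime_components_preserve_positivity_general [Fintype V] {G : SimpleGraph V}
    (h : IsPerfectOrdering G B) {f : ℝ → ℝ} (hf0 : f 0 = 0)
    (hpres : ∀ i, PreservesPositivityOn f (PsetSub G (B i)))
    (hf : ∀ i, LoewnerSuperadditive f (separator B i)) :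
    PreservesPositivityOn f (PsetG G univ) := by
  rintro A ⟨hA, -, hAG⟩
  refine h.preservesPositivityOn_biUnion hf0 hpres hf Finset.univ (by simp [isLowerSet_univ]) A
    ⟨hA, fun i j hij => ?_, hAG⟩
  simp [h.exists_mem] at hij

end PerfectOrdering

/-- **Theorem 4.1**: let `G` have a perfect ordering `B_1, …, B_k` of its prime components,
with separators `S_j = (B_1 ∪ ⋯ ∪ B_{j−1}) ∩ B_j` of maximal size `s`, and let `f(0) = 0`.
If `f[−]` preserves positivity on each `P_{G_{B_i}}` and is Loewner super-additive on
`P_{K_s}(ℝ)`, then `f[−]` preserves positivity on `P_G`. -/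
theorem prime_components_preserve_positivity {V : Type*} [Fintype V] [DecidableEq V]
    (G : SimpleGraph V) (k : ℕ) (B : Fin k → Finset V)
    (hcoverV : ∀ v : V, ∃ i, v ∈ B i)
    (hcoverE : ∀ u v : V, G.Adj u v → ∃ i, u ∈ B i ∧ v ∈ B i)
    (hprime : ∀ i, IsPrimeGraph (G.induce ((B i : Finset V) : Set V)))
    (S : Fin k → Finset V)
    (hS : ∀ i, S i = ((Finset.univ.filter (fun j => j < i)).biUnion B) ∩ B i)
    (hperf : ∀ i : Fin k, 0 < (i : ℕ) → ∃ j, j < i ∧ S i ⊆ B j)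
    (hScl : ∀ i, G.IsClique ↑(S i))
    (s : ℕ) (hs : s = Finset.univ.sup (fun i => (S i).card))
    (f : ℝ → ℝ) (hf0 : f 0 = 0)
    (hpres : ∀ i, ∀ M ∈ PsetSub G ((B i : Finset V) : Set V), (M.map f).PosSemidef)
    (hsuper : ∀ M N : Matrix (Fin s) (Fin s) ℝ, M.PosSemidef → N.PosSemidef →
      ((M + N).map f - M.map f - N.map f).PosSemidef) :
    ∀ A ∈ PsetG G univ, (A.map f).PosSemidef := by
  obtain rfl : S = separator B := funext hS
  refine prime_components_preserve_positivity_general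
    ⟨hcoverV, hcoverE, fun i _ hji => hperf i (Nat.zero_lt_of_lt hji), hScl⟩ hf0 hpres
    fun i => LoewnerSuperadditive.of_card_le hsuper ?_
  simpa [hs] using Finset.le_sup (f := fun i => (separator B i).card) (Finset.mem_univ i)
end
end

section
/- Let C_n denote the cycle graph on n vertices. For all n ≥ 3, H_{C_n} = H_{C_n}^ψ = [1,∞), and H_{C_4}^φ = [2,∞). Moreover, for every n > 4 one has [2,∞) ⊆ H_{C_n}^φ ⊆ [1,∞), and 1 ∉ H_{C_n}^φ when n is even. -/
open Set Matrix

noncomputable section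

/-!
Gaussian elimination of a vertex `v` splits `A` into its Schur complement and a rank-one matrix.
When the neighbours of `v` are pairwise non-adjacent, `ψ_α` is additive along this splitting off the
diagonal and superadditive on it for `α ≥ 1`, so `H_G^ψ` inherits `α` from the elimination graph.
Eliminating the vertices of a cycle one by one leads to the triangle, where the Schur complement is
supported on a single edge and one compares `ψ_α[T]` with `ψ_α[T + S]` by differentiating along the
segment `T + s S`.

The bound `α ≥ 1` is visible on a path with two edges. For even cycles, the matrix with diagonal
`2 cos (π / n)`, one edge weight `1` and all others `-1` is positive semidefinite by the
Fan–Taussky–Todd inequality; `φ_α` removes the signs, and testing against the alternating vector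
forces `2 ≤ (2 cos (π / n)) ^ α`, which excludes `α < 2` for `n = 4` and `α = 1` for every even `n`.
-/

theorem phiF_zero (α : ℝ) : phiF α 0 = 0 := if_pos rfl

theorem psiF_zero (α : ℝ) : psiF α 0 = 0 := by simp [psiF]

theorem psiF_of_nonneg {α x : ℝ} (hα : 0 < α) (hx : 0 ≤ x) : psiF α x = x ^ α := by
  rcases hx.eq_or_lt with rfl | hx
  · simp [psiF, hα.ne']
  · simp [psiF, Real.sign_of_pos hx, abs_of_pos hx]

theorem psiF_nonneg {α x : ℝ} (hx : 0 ≤ x) : 0 ≤ psiF α x := by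
  rcases hx.eq_or_lt with rfl | hx
  · exact (psiF_zero α).ge
  · rw [psiF, Real.sign_of_pos hx, one_mul]
    positivity

theorem psiF_mul (α x y : ℝ) : psiF α (x * y) = psiF α x * psiF α y := by
  have hsign : Real.sign (x * y) = Real.sign x * Real.sign y := by
    rcases lt_trichotomy x 0 with hx | rfl | hx <;> rcases lt_trichotomy y 0 with hy | rfl | hy <;>
      simp [Real.sign_of_neg, Real.sign_of_pos, mul_pos_of_neg_of_neg, mul_neg_of_neg_of_pos,
        mul_neg_of_pos_of_neg, *]
  rw [psiF, psiF, psiF, hsign, abs_mul, Real.mul_rpow (abs_nonneg x) (abs_nonneg y),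
    mul_mul_mul_comm]

theorem psiF_inv (α x : ℝ) : psiF α x⁻¹ = (psiF α x)⁻¹ := by
  rw [psiF, psiF, mul_inv, Real.sign_inv, Real.inv_sign, abs_inv, Real.inv_rpow (abs_nonneg x)]

theorem psiF_neg (α x : ℝ) : psiF α (-x) = -psiF α x := by
  rw [psiF, psiF, Real.sign_neg, abs_neg, neg_mul]

theorem psiF_add_le {α x y : ℝ} (hα : 1 ≤ α) (hx : 0 ≤ x) (hy : 0 ≤ y) :
    psiF α x + psiF α y ≤ psiF α (x + y) := by
  have hα₀ : 0 < α := by linarith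
  rw [psiF_of_nonneg hα₀ hx, psiF_of_nonneg hα₀ hy, psiF_of_nonneg hα₀ (add_nonneg hx hy)]
  exact Real.add_rpow_le_rpow_add hx hy hα

theorem psiF_div_self {α x : ℝ} (hx : x ≠ 0) : psiF α x / x = |x| ^ (α - 1) := by
  rw [Real.rpow_sub_one (abs_ne_zero.2 hx), psiF]
  rcases hx.lt_or_gt with hx | hx
  · rw [Real.sign_of_neg hx, abs_of_neg hx, div_neg, neg_one_mul, neg_div]
  · rw [Real.sign_of_pos hx, abs_of_pos hx, one_mul]

theorem hasDerivAt_psiF_of_pos {α x : ℝ} (hα : 1 ≤ α) (hx : 0 < x) :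
    HasDerivAt (psiF α) (α * |x| ^ (α - 1)) x := by
  rw [abs_of_pos hx]
  refine (Real.hasDerivAt_rpow_const (Or.inl hx.ne')).congr_of_eventuallyEq ?_
  filter_upwards [Ioi_mem_nhds hx] with y hy
  exact psiF_of_nonneg (by linarith) (le_of_lt hy)

theorem hasDerivAt_psiF_zero {α : ℝ} (hα : 1 ≤ α) :
    HasDerivAt (psiF α) (α * |0| ^ (α - 1)) 0 := by
  have hval : α * |(0 : ℝ)| ^ (α - 1) = |0| ^ (α - 1) := by
    rcases hα.eq_or_lt with rfl | hα
    · rw [one_mul]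
    · simp [Real.zero_rpow (sub_pos.2 hα).ne']
  have hcont : ContinuousAt (fun y : ℝ => |y| ^ (α - 1)) 0 :=
    continuous_abs.continuousAt.rpow_const (Or.inr (sub_nonneg.2 hα))
  rw [hasDerivAt_iff_tendsto_slope, hval]
  refine (hcont.tendsto.mono_left nhdsWithin_le_nhds).congr' ?_
  filter_upwards [self_mem_nhdsWithin] with y hy
  rw [slope_def_field, psiF_zero, sub_zero, sub_zero, psiF_div_self hy]

theorem hasDerivAt_psiF {α : ℝ} (hα : 1 ≤ α) (x : ℝ) :
    HasDerivAt (psiF α) (α * |x| ^ (α - 1)) x := by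
  rcases lt_trichotomy x 0 with hx | rfl | hx
  · have h := ((hasDerivAt_psiF_of_pos hα (neg_pos.2 hx)).comp x (hasDerivAt_neg x)).neg
    rw [abs_neg, mul_neg_one, neg_neg] at h
    exact h.congr_of_eventuallyEq (.of_forall fun y => by simp [psiF_neg])
  · exact hasDerivAt_psiF_zero hα
  · exact hasDerivAt_psiF_of_pos hα hx

variable {V : Type*}

section PivotPart

/-- The rank-one part `A v v⁻¹ • A vᵀ (A v)` of a symmetric matrix `A` that Gaussian elimination
of the variable `v` removes: `A - pivotPart A v` is the Schur complement of the pivot `A v v`,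
with the row and column `v` kept and filled with zeros. It vanishes when `A v v = 0`. -/
def pivotPart (A : Matrix V V ℝ) (v : V) : Matrix V V ℝ :=
  (A v v)⁻¹ • vecMulVec (A v) (A v)

theorem pivotPart_apply (A : Matrix V V ℝ) (v i j : V) :
    pivotPart A v i j = (A v v)⁻¹ * (A v i * A v j) := rfl

theorem posSemidef_pivotPart [Finite V] {A : Matrix V V ℝ} {v : V} (hv : 0 ≤ A v v) :
    (pivotPart A v).PosSemidef := by
  have h := posSemidef_vecMulVec_self_star (A v)
  rw [star_trivial] at h
  exact h.smul (inv_nonneg.2 hv)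

theorem pivotPart_map_psiF (α : ℝ) (A : Matrix V V ℝ) (v : V) :
    (pivotPart A v).map (psiF α) = pivotPart (A.map (psiF α)) v := by
  ext i j
  simp only [pivotPart_apply, map_apply, psiF_mul, psiF_inv]

theorem sq_apply_le_of_posSemidef {A : Matrix V V ℝ} (hA : A.PosSemidef) (i j : V) :
    A i j ^ 2 ≤ A i i * A j j := by
  have hdet := (hA.submatrix ![i, j]).det_nonneg
  have hsymm : A j i = A i j := by simpa using hA.isHermitian.apply i j
  simp only [det_fin_two, submatrix_apply, cons_val_zero, cons_val_one, hsymm] at hdet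
  linarith [sq (A i j)]

theorem sq_abs_rpow_le_of_posSemidef {β : ℝ} (hβ : 0 ≤ β) {A : Matrix V V ℝ}
    (hA : A.PosSemidef) (i j : V) :
    (|A i j| ^ β) ^ 2 ≤ |A i i| ^ β * |A j j| ^ β := by
  rw [← Real.mul_rpow (abs_nonneg _) (abs_nonneg _), ← abs_mul, sq,
    ← Real.mul_rpow (abs_nonneg _) (abs_nonneg _), ← sq, sq_abs,
    abs_of_nonneg (mul_nonneg hA.diag_nonneg hA.diag_nonneg)]
  exact Real.rpow_le_rpow (sq_nonneg _) (sq_apply_le_of_posSemidef hA i j) hβ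

theorem apply_eq_zero_of_diag_eq_zero {A : Matrix V V ℝ} (hA : A.PosSemidef) {i : V}
    (hi : A i i = 0) (j : V) : A i j = 0 := by
  simpa [hi] using sq_apply_le_of_posSemidef hA i j

theorem pivotPart_apply_self {A : Matrix V V ℝ} {v j : V} (h : A v v = 0 → A v j = 0) :
    pivotPart A v v j = A v j := by
  rcases eq_or_ne (A v v) 0 with hv | hv
  · rw [pivotPart_apply, h hv, mul_zero, mul_zero]
  · rw [pivotPart_apply, inv_mul_cancel_left₀ hv]

theorem sub_pivotPart_eq_diagonal_of_edge [DecidableEq V] {A : Matrix V V ℝ} {u w : V}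
    (hA : A.IsHermitian)
    (hedge : ∀ i j, i ≠ j → ¬(SimpleGraph.edge u w).Adj i j → A i j = 0)
    (hu : A u u = 0 → A u w = 0) :
    A - pivotPart A u = diagonal fun i => A i i - pivotPart A u i i := by
  have hrow {j : V} (hju : j ≠ u) (hjw : j ≠ w) : A u j = 0 :=
    hedge u j hju.symm (by simp [SimpleGraph.edge_adj, hju, hjw])
  have hpivot (j : V) : pivotPart A u u j = A u j := pivotPart_apply_self fun huu => by
    rcases eq_or_ne j u with rfl | hju
    · exact huu
    rcases eq_or_ne j w with rfl | hjw
    · exact hu huu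
    · exact hrow hju hjw
  ext i j
  rcases eq_or_ne i j with rfl | hij
  · rw [diagonal_apply_eq, Matrix.sub_apply]
  rw [diagonal_apply_ne _ hij, Matrix.sub_apply, sub_eq_zero]
  rcases eq_or_ne i u with rfl | hiu
  · rw [hpivot]
  rcases eq_or_ne j u with rfl | hju
  · rw [pivotPart_apply, mul_comm (A j i), ← pivotPart_apply, hpivot, ← hA.apply, star_trivial]
  have hprod : A u i * A u j = 0 := by
    rcases eq_or_ne i w with rfl | hiw
    · rw [hrow hju hij.symm, mul_zero]
    · rw [hrow hiu hiw, zero_mul]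
  rw [pivotPart_apply, hprod, mul_zero]
  exact hedge i j hij (by simp [SimpleGraph.edge_adj, hiu, hju])

theorem posSemidef_of_edge [Finite V] {A : Matrix V V ℝ} {u w : V} (hA : A.IsHermitian)
    (hedge : ∀ i j, i ≠ j → ¬(SimpleGraph.edge u w).Adj i j → A i j = 0)
    (hdiag : ∀ i, 0 ≤ A i i) (hdet : A u w ^ 2 ≤ A u u * A w w) : A.PosSemidef := by
  classical
  have hdiff (i : V) : 0 ≤ A i i - pivotPart A u i i := by
    rcases eq_or_ne i u with rfl | hiu
    · rw [pivotPart_apply_self id, sub_self]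
    rw [pivotPart_apply, sub_nonneg, ← sq]
    rcases eq_or_ne i w with rfl | hiw
    · exact inv_mul_le_of_le_mul₀ (hdiag u) (hdiag i) hdet
    · simpa [hedge u i hiu.symm (by simp [SimpleGraph.edge_adj, hiu, hiw])] using hdiag i
  rw [← add_sub_cancel (pivotPart A u) A,
    sub_pivotPart_eq_diagonal_of_edge hA hedge fun hu => by simpa [hu] using hdet]
  exact (posSemidef_pivotPart (hdiag u)).add (.diagonal hdiff)

theorem dotProduct_pivotPart_mulVec [Fintype V] (A : Matrix V V ℝ) (v : V) (x : V → ℝ) :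
    x ⬝ᵥ pivotPart A v *ᵥ x = (A v v)⁻¹ * (A v ⬝ᵥ x) ^ 2 := by
  rw [pivotPart, smul_mulVec, dotProduct_smul, vecMulVec_mulVec, dotProduct_smul]
  simp only [smul_eq_mul, MulOpposite.smul_eq_mul_unop, MulOpposite.unop_op, dotProduct_comm x]
  ring

theorem posSemidef_sub_pivotPart [Finite V] {A : Matrix V V ℝ} (hA : A.PosSemidef) (v : V) :
    (A - pivotPart A v).PosSemidef := by
  classical
  cases nonempty_fintype V
  rcases hA.diag_nonneg (i := v) |>.eq_or_lt with hv | hv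
  · rwa [pivotPart, ← hv, _root_.inv_zero, zero_smul, sub_zero]
  refine .of_dotProduct_mulVec_nonneg
    (hA.isHermitian.sub (posSemidef_pivotPart hv.le).isHermitian) fun x => ?_
  have hcol : x ⬝ᵥ A.col v = A v ⬝ᵥ x := by
    rw [dotProduct_comm]
    congr 1
    ext i
    simpa using hA.isHermitian.apply v i
  -- The minimum over `t` of the form at `x - t • e_v` is the form of the Schur complement at `x`.
  have hexpand (t : ℝ) : (x - Pi.single v t) ⬝ᵥ A *ᵥ (x - Pi.single v t) =
      x ⬝ᵥ A *ᵥ x - 2 * t * (A v ⬝ᵥ x) + t ^ 2 * A v v := by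
    have hrow : (A *ᵥ x) v = A v ⬝ᵥ x := rfl
    simp only [mulVec_sub, sub_dotProduct, dotProduct_sub, mulVec_single, single_dotProduct,
      dotProduct_smul, hcol, hrow, col_apply, MulOpposite.smul_eq_mul_unop,
      MulOpposite.unop_op]
    ring
  have hmin := hA.dotProduct_mulVec_nonneg (x - Pi.single v ((A v v)⁻¹ * (A v ⬝ᵥ x)))
  rw [star_trivial, hexpand] at hmin
  rw [star_trivial, sub_mulVec, dotProduct_sub, dotProduct_pivotPart_mulVec]
  convert hmin using 1
  field_simp
  ring

theorem posSemidef_map_psiF_pivotPart [Finite V] (α : ℝ) {A : Matrix V V ℝ} (hA : A.PosSemidef)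
    (v : V) : ((pivotPart A v).map (psiF α)).PosSemidef := by
  rw [pivotPart_map_psiF]
  exact posSemidef_pivotPart (psiF_nonneg hA.diag_nonneg)

end PivotPart

theorem posSemidef_map_add_sub_map {f f' : ℝ → ℝ} (hf : ∀ x, HasDerivAt f (f' x) x)
    [Finite V] {T S : Matrix V V ℝ} (hT : T.IsHermitian) (hS : S.IsHermitian)
    (h : ∀ s ∈ Ioo (0 : ℝ) 1, ((T + s • S).map f' ⊙ S).PosSemidef) :
    ((T + S).map f - T.map f).PosSemidef := by
  cases nonempty_fintype V
  have hmap {M : Matrix V V ℝ} (hM : M.IsHermitian) : (M.map f).IsHermitian := hM.map f fun _ => rfl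
  refine .of_dotProduct_mulVec_nonneg ((hmap (hT.add hS)).sub (hmap hT)) fun x => ?_
  let F (s : ℝ) : ℝ := x ⬝ᵥ (T + s • S).map f *ᵥ x
  have hF (s : ℝ) : HasDerivAt F (x ⬝ᵥ ((T + s • S).map f' ⊙ S) *ᵥ x) s := by
    have hentry (i j : V) : HasDerivAt (fun s => f (T i j + s * S i j))
        (f' (T i j + s * S i j) * S i j) s := by
      simpa [Function.comp_def] using
        (hf _).comp s (((hasDerivAt_id s).mul_const (S i j)).const_add (T i j))
    simp only [F, dotProduct, mulVec]
    exact .fun_sum fun i _ => (HasDerivAt.fun_sum fun j _ =>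
      (hentry i j).mul_const (x j)).const_mul (x i)
  have hmono : MonotoneOn F (Icc 0 1) := by
    refine monotoneOn_of_hasDerivWithinAt_nonneg (convex_Icc 0 1)
      (fun s _ => (hF s).continuousAt.continuousWithinAt) (fun s _ => (hF s).hasDerivWithinAt)
      fun s hs => ?_
    rw [interior_Icc] at hs
    simpa using (h s hs).dotProduct_mulVec_nonneg x
  have hle := hmono (left_mem_Icc.2 zero_le_one) (right_mem_Icc.2 zero_le_one) zero_le_one
  simp only [F, zero_smul, one_smul, add_zero] at hle
  rwa [star_trivial, sub_mulVec, dotProduct_sub, sub_nonneg]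

section Eliminate

/-- The elimination graph of `G` at `v`: `v` is isolated and its neighbours are joined to one
another. Schur complements at `v` of matrices supported on `G` are supported on it. -/
def eliminate (G : SimpleGraph V) (v : V) : SimpleGraph V where
  Adj i j := i ≠ j ∧ i ≠ v ∧ j ≠ v ∧ (G.Adj i j ∨ G.Adj v i ∧ G.Adj v j)
  symm := ⟨fun i j h => by simpa only [G.adj_comm i j, and_comm, ne_comm, and_left_comm] using h⟩
  loopless := ⟨fun _ h => h.1 rfl⟩

variable [Fintype V] {G : SimpleGraph V} {A : Matrix V V ℝ} {v : V}

theorem sub_pivotPart_mem_PsetG (hA : A ∈ PsetG G univ) (v : V) :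
    A - pivotPart A v ∈ PsetG (eliminate G v) univ := by
  obtain ⟨hA, -, hG⟩ := hA
  have hS := posSemidef_sub_pivotPart hA v
  have hrow (j : V) : (A - pivotPart A v) v j = 0 := by
    rw [Matrix.sub_apply,
      pivotPart_apply_self fun hv => apply_eq_zero_of_diag_eq_zero hA hv j, sub_self]
  refine ⟨hS, fun _ _ => mem_univ _, fun i j hij hadj => ?_⟩
  rcases eq_or_ne i v with rfl | hi
  · exact hrow j
  rcases eq_or_ne j v with rfl | hj
  · simpa only [hrow, star_trivial] using (hS.isHermitian.apply i j).symm
  simp only [eliminate, not_and, not_or] at hadj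
  obtain ⟨hnadj, hnbr⟩ := hadj hij hi hj
  have hpair : A v i * A v j = 0 := by
    by_cases hvi : G.Adj v i
    · rw [hG v j hj.symm (hnbr hvi), mul_zero]
    · rw [hG v i hi.symm hvi, zero_mul]
  rw [Matrix.sub_apply, pivotPart_apply, hpair, hG i j hij hnadj, mul_zero, sub_zero]

theorem map_psiF_mem_PsetG {α : ℝ} (hA : A ∈ PsetG G univ) (h : (A.map (psiF α)).PosSemidef) :
    A.map (psiF α) ∈ PsetG G univ :=
  ⟨h, fun _ _ => mem_univ _, fun i j hij hadj => by
    rw [map_apply, hA.2.2 i j hij hadj, psiF_zero]⟩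

theorem psiF_sub_pivotPart_add_psiF_pivotPart (α : ℝ) (hA : A ∈ PsetG G univ)
    (hv : G.IsIndepSet (G.neighborSet v)) {i j : V} (hij : i ≠ j) :
    psiF α ((A - pivotPart A v) i j) + psiF α (pivotPart A v i j) = psiF α (A i j) := by
  rw [Matrix.sub_apply]
  by_cases hadj : G.Adj i j
  · by_cases hmem : i = v ∨ j = v
    · have hS : (A - pivotPart A v) i j = 0 :=
        (sub_pivotPart_mem_PsetG hA v).2.2 i j hij fun h => hmem.elim h.2.1 h.2.2.1
      rw [Matrix.sub_apply, sub_eq_zero] at hS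
      rw [hS, sub_self, psiF_zero, zero_add]
    · push Not at hmem
      have hpair : A v i * A v j = 0 := by
        by_cases hvi : G.Adj v i
        · rw [hA.2.2 v j hmem.2.symm fun hvj => hv hvi hvj hij hadj, mul_zero]
        · rw [hA.2.2 v i hmem.1.symm hvi, zero_mul]
      rw [pivotPart_apply, hpair, mul_zero, sub_zero, psiF_zero, add_zero]
  · rw [hA.2.2 i j hij hadj, zero_sub, psiF_neg, psiF_zero, neg_add_cancel]

/-- Off the diagonal `ψ_α` is additive along `A = (A - pivotPart A v) + pivotPart A v`. -/
theorem mem_HsetPsi_of_eliminate {α : ℝ} (hα : 1 ≤ α) (hv : G.IsIndepSet (G.neighborSet v))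
    (h : α ∈ HsetPsi (eliminate G v)) : α ∈ HsetPsi G := by
  classical
  intro A hA
  refine map_psiF_mem_PsetG hA ?_
  have hS := posSemidef_sub_pivotPart hA.1 v
  let d (i : V) : ℝ :=
    psiF α (A i i) - (psiF α ((A - pivotPart A v) i i) + psiF α (pivotPart A v i i))
  have hd : 0 ≤ d := fun i => by
    have h := psiF_add_le hα (hS.diag_nonneg (i := i))
      ((posSemidef_pivotPart (v := v) hA.1.diag_nonneg).diag_nonneg (i := i))
    rwa [← Matrix.add_apply, sub_add_cancel, ← sub_nonneg] at h
  have hsplit : A.map (psiF α) = (A - pivotPart A v).map (psiF α) +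
      (pivotPart A v).map (psiF α) + diagonal d := by
    ext i j
    rcases eq_or_ne i j with rfl | hij
    · simp only [map_apply, Matrix.add_apply, diagonal_apply_eq, d]
      ring
    · simp only [map_apply, Matrix.add_apply, diagonal_apply_ne _ hij, add_zero,
        psiF_sub_pivotPart_add_psiF_pivotPart α hA hv hij]
  rw [hsplit]
  exact ((h _ (sub_pivotPart_mem_PsetG hA v)).1.add (posSemidef_map_psiF_pivotPart α hA.1 v)).add
    (.diagonal hd)

theorem mem_HsetPsi_of_eliminate_le_edge {α : ℝ} (hα : 1 ≤ α) {u w : V}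
    (h : eliminate G v ≤ SimpleGraph.edge u w) : α ∈ HsetPsi G := by
  intro A hA
  refine map_psiF_mem_PsetG hA ?_
  obtain ⟨hS, -, hsupp⟩ := sub_pivotPart_mem_PsetG hA v
  have hT : (pivotPart A v).PosSemidef := posSemidef_pivotPart hA.1.diag_nonneg
  have hmono := posSemidef_map_add_sub_map (hasDerivAt_psiF hα) hT.isHermitian hS.isHermitian
    fun s hs => ?_
  · rw [add_sub_cancel] at hmono
    rw [← sub_add_cancel (A.map (psiF α)) ((pivotPart A v).map (psiF α))]
    exact hmono.add (posSemidef_map_psiF_pivotPart α hA.1 v)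
  generalize A - pivotPart A v = S at hS hsupp
  have hM := hT.add (hS.smul hs.1.le)
  generalize pivotPart A v + s • S = M at hM
  refine posSemidef_of_edge (u := u) (w := w)
    (.hadamard (hM.isHermitian.map _ fun _ => rfl) hS.isHermitian) (fun i j hij hadj => ?_)
    (fun i => ?_) ?_
  · rw [hadamard_apply, hsupp i j hij fun hS => hadj (h hS), mul_zero]
  · have hSi : 0 ≤ S i i := hS.diag_nonneg
    simp only [hadamard_apply, map_apply]
    positivity
  · simp only [hadamard_apply, map_apply]
    calc (α * |M u w| ^ (α - 1) * S u w) ^ 2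
        = α ^ 2 * ((|M u w| ^ (α - 1)) ^ 2 * S u w ^ 2) := by ring
      _ ≤ α ^ 2 * (|M u u| ^ (α - 1) * |M w w| ^ (α - 1) * (S u u * S w w)) := by
        gcongr
        · exact sq_abs_rpow_le_of_posSemidef (sub_nonneg.2 hα) hM u w
        · exact sq_apply_le_of_posSemidef hS u w
      _ = _ := by ring

end Eliminate

theorem single_add_single_mul_eq_zero [DecidableEq V] {G : SimpleGraph V} {u v i j : V}
    (huv : G.Adj u v) (hij : i ≠ j) (hadj : ¬G.Adj i j) :
    (Pi.single u 1 + Pi.single v 1 : V → ℝ) i * (Pi.single u 1 + Pi.single v 1 : V → ℝ) j = 0 := by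
  have hvu := huv.symm
  simp only [Pi.add_apply, Pi.single_apply]
  split_ifs <;> simp_all

section Inclusions

variable [Fintype V] {G : SimpleGraph V}

theorem HsetPsi_anti {G' : SimpleGraph V} (h : G ≤ G') : HsetPsi G' ⊆ HsetPsi G :=
  fun _ hα A hA => map_psiF_mem_PsetG hA
    (hα A ⟨hA.1, hA.2.1, fun i j hij hadj => hA.2.2 i j hij fun hG => hadj (h hG)⟩).1

theorem HsetPsi_subset_HsetG (G : SimpleGraph V) : HsetPsi G ⊆ HsetG G := by
  intro α hα A hA
  have h : A.map (powEnt α) = A.map (psiF α) := by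
    ext i j
    have hij : 0 ≤ A i j := hA.2.1 i j
    rcases hij.eq_or_lt with hij | hij
    · simp [powEnt, psiF, ← hij]
    · simp [powEnt, psiF, hij.ne', Real.sign_of_pos hij, abs_of_pos hij]
  rw [h]
  exact hα A ⟨hA.1, fun _ _ => mem_univ _, hA.2.2⟩

theorem HsetPhi_subset_HsetG (G : SimpleGraph V) : HsetPhi G ⊆ HsetG G := by
  intro α hα A hA
  have h : A.map (powEnt α) = A.map (phiF α) := by
    ext i j
    have hij : 0 ≤ A i j := hA.2.1 i j
    simp [powEnt, phiF, abs_of_nonneg hij]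
  rw [h]
  exact hα A ⟨hA.1, fun _ _ => mem_univ _, hA.2.2⟩

theorem phiF_eq_powEnt_half (α x : ℝ) : phiF α x = powEnt (α / 2) (x * x) := by
  rcases eq_or_ne x 0 with rfl | hx
  · simp [phiF, powEnt]
  · rw [phiF, powEnt, if_neg hx, if_neg (mul_self_ne_zero.2 hx), ← abs_mul_abs_self,
      Real.mul_rpow (abs_nonneg x) (abs_nonneg x), ← Real.rpow_add (abs_pos.2 hx), add_halves]

/-- `φ_α[A]` is the entrywise power `α / 2` of the Schur product `A ⊙ A`. -/
theorem mem_HsetPhi_of_half_mem_HsetG {α : ℝ} (hα : α / 2 ∈ HsetG G) : α ∈ HsetPhi G := by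
  intro A hA
  have h : A.map (phiF α) = (A ⊙ A).map (powEnt (α / 2)) := by
    ext i j
    exact phiF_eq_powEnt_half α (A i j)
  rw [h]
  refine hα _ ⟨hA.1.hadamard hA.1, fun i j => mul_self_nonneg (A i j), fun i j hij hadj => ?_⟩
  rw [hadamard_apply, hA.2.2 i j hij hadj, mul_zero]

theorem HsetG_subset_Ici_one {u v w : V} (hu : G.Adj v u) (hw : G.Adj v w) (huw : u ≠ w) :
    HsetG G ⊆ Ici 1 := by
  classical
  intro α hα
  let p : V → ℝ := Pi.single v 1 + Pi.single u 1
  let q : V → ℝ := Pi.single v 1 + Pi.single w 1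
  have hp : 0 ≤ p := add_nonneg (Pi.single_nonneg.2 zero_le_one) (Pi.single_nonneg.2 zero_le_one)
  have hq : 0 ≤ q := add_nonneg (Pi.single_nonneg.2 zero_le_one) (Pi.single_nonneg.2 zero_le_one)
  have hpq : vecMulVec p p + vecMulVec q q ∈ PsetG G (Ici 0) :=
    ⟨(posSemidef_vecMulVec_self_star p).add (posSemidef_vecMulVec_self_star q),
      fun i j => add_nonneg (mul_nonneg (hp i) (hp j)) (mul_nonneg (hq i) (hq j)),
      fun i j hij hadj => by
        rw [Matrix.add_apply, vecMulVec_apply, vecMulVec_apply,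
          single_add_single_mul_eq_zero hu hij hadj, single_add_single_mul_eq_zero hw hij hadj,
          add_zero]⟩
  have hsub : ((vecMulVec p p + vecMulVec q q).map (powEnt α)).submatrix ![u, v, w] ![u, v, w] =
      !![1, 1, 0; 1, 2 ^ α, 1; 0, 1, 1] := by
    ext i j
    fin_cases i <;> fin_cases j <;>
      simp [powEnt, p, q, vecMulVec_apply, hu.ne, hu.ne', hw.ne, hw.ne', huw, huw.symm,
        one_add_one_eq_two]
  have hform := ((hα _ hpq).1.submatrix ![u, v, w]).dotProduct_mulVec_nonneg ![1, -1, 1]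
  have hpow : (2 : ℝ) ^ (1 : ℝ) ≤ 2 ^ α := by
    have heval : star ![1, -1, 1] ⬝ᵥ !![1, 1, 0; 1, 2 ^ α, 1; 0, 1, 1] *ᵥ ![1, -1, 1] =
        (2 : ℝ) ^ α - 2 := by
      simp only [star_trivial, dotProduct, mulVec, Fin.sum_univ_three, of_apply, cons_val]
      ring
    rw [hsub, heval, sub_nonneg] at hform
    rwa [Real.rpow_one]
  exact (Real.rpow_le_rpow_left_iff one_lt_two).1 hpow

end Inclusions

section Cycle

/-- The cycle `0, 1, …, m` on an initial segment of `Fin n`, all later vertices being isolated. -/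
def initialCycle (n m : ℕ) : SimpleGraph (Fin n) where
  Adj i j := i ≠ j ∧ (i : ℕ) ≤ m ∧ (j : ℕ) ≤ m ∧
    ((j : ℕ) = i + 1 ∨ (i : ℕ) = j + 1 ∨ (i : ℕ) = 0 ∧ (j : ℕ) = m ∨ (j : ℕ) = 0 ∧ (i : ℕ) = m)
  symm := ⟨fun i j h => by grind⟩
  loopless := ⟨fun _ h => h.1 rfl⟩

theorem eliminate_initialCycle_le {n m : ℕ} {v : Fin n} (hv : (v : ℕ) = m + 1) :
    eliminate (initialCycle n (m + 1)) v ≤ initialCycle n m := by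
  intro i j h
  simp only [eliminate, initialCycle] at h ⊢
  grind

theorem isIndepSet_neighborSet_initialCycle {n m : ℕ} (hm : 2 ≤ m) {v : Fin n}
    (hv : (v : ℕ) = m + 1) :
    (initialCycle n (m + 1)).IsIndepSet ((initialCycle n (m + 1)).neighborSet v) := by
  intro i hi j hj hij
  simp only [initialCycle, SimpleGraph.mem_neighborSet] at hi hj ⊢
  grind

theorem Ici_subset_HsetPsi_initialCycle {n m : ℕ} (hm : 2 ≤ m) (hmn : m < n) :
    Ici 1 ⊆ HsetPsi (initialCycle n m) := by
  intro α hα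
  induction m, hm using Nat.le_induction with
  | base =>
    refine mem_HsetPsi_of_eliminate_le_edge (v := ⟨2, hmn⟩) (u := ⟨0, by omega⟩)
      (w := ⟨1, by omega⟩) hα fun i j h => ?_
    simp only [eliminate, initialCycle, SimpleGraph.edge_adj] at h ⊢
    grind
  | succ m hm ih =>
    exact mem_HsetPsi_of_eliminate (v := ⟨m + 1, hmn⟩) hα
      (isIndepSet_neighborSet_initialCycle hm rfl)
      (HsetPsi_anti (eliminate_initialCycle_le rfl) (ih (by omega)))

theorem cycleGraph_le_initialCycle (n : ℕ) :
    SimpleGraph.cycleGraph (n + 1) ≤ initialCycle (n + 1) n := by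
  intro i j h
  have hij := h.ne
  rw [SimpleGraph.cycleGraph_adj'] at h
  rcases hij.lt_or_gt with hlt | hlt <;>
  · rw [Fin.sub_val_of_le hlt.le, Fin.coe_sub_iff_lt.2 hlt] at h
    simp only [initialCycle]
    rw [Fin.lt_def] at hlt
    omega

theorem Ici_subset_HsetPsi_cycleGraph {n : ℕ} (hn : 3 ≤ n) :
    Ici 1 ⊆ HsetPsi (SimpleGraph.cycleGraph n) := by
  obtain ⟨m, rfl⟩ : ∃ m, n = m + 1 := ⟨n - 1, by omega⟩
  exact (Ici_subset_HsetPsi_initialCycle (by omega) (by omega)).trans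
    (HsetPsi_anti (cycleGraph_le_initialCycle m))

end Cycle

section FanTausskyTodd

theorem sq_sub_mul_eq_sq_of_recurrence {c : ℝ} {s : ℕ → ℝ} (hs₀ : s 0 = 0)
    (hs : ∀ k, s k + s (k + 2) = 2 * c * s (k + 1)) (p : ℕ) :
    s (p + 1) ^ 2 - s p * s (p + 2) = s 1 ^ 2 := by
  induction p with
  | zero => rw [hs₀, zero_mul, sub_zero]
  | succ p ih => linear_combination ih + s (p + 2) * hs p - s (p + 1) * hs (p + 1)

/-- Completing squares along a positive solution of `s (k + 2) - 2 c s (k + 1) + s k = 0`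
eliminates `y 1, …, y p` from the form `∑ (2 c y k ^ 2 - 2 y k y (k + 1))`. -/
theorem le_sum_of_recurrence {c : ℝ} {s : ℕ → ℝ} (hs₀ : s 0 = 0)
    (hs : ∀ k, s k + s (k + 2) = 2 * c * s (k + 1)) (y : ℕ → ℝ) (p : ℕ)
    (hpos : ∀ k ≤ p, 0 < s (k + 1)) :
    (s (p + 2) * y 0 ^ 2 - 2 * s 1 * y 0 * y (p + 1) - s p * y (p + 1) ^ 2) / s (p + 1) ≤
      ∑ k ∈ Finset.range (p + 1), (2 * c * y k ^ 2 - 2 * (y k * y (k + 1))) := by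
  induction p with
  | zero =>
    have h₁ := hpos 0 le_rfl
    rw [Finset.sum_range_one, div_le_iff₀ h₁]
    refine le_of_eq ?_
    linear_combination y 0 ^ 2 * hs 0 - (y 1 ^ 2 + y 0 ^ 2) * hs₀
  | succ p ih =>
    have hb := hpos p p.le_succ
    have hd := hpos (p + 1) le_rfl
    have hsq : 0 ≤ (s (p + 2) * y (p + 1) - s (p + 1) * y (p + 2) - s 1 * y 0) ^ 2 /
        (s (p + 1) * s (p + 2)) := div_nonneg (sq_nonneg _) (mul_pos hb hd).le
    rw [Finset.sum_range_succ]
    refine le_trans (sub_nonneg.1 (le_of_le_of_eq hsq ?_))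
      (add_le_add_left (ih fun k hk => hpos k (hk.trans p.le_succ)) _)
    rw [← sub_eq_zero]
    field_simp
    linear_combination y (p + 1) ^ 2 * s (p + 2) * hs p
      - y 0 ^ 2 * sq_sub_mul_eq_sq_of_recurrence hs₀ hs (p + 1)

theorem sin_add_sin_add_two_mul (θ : ℝ) (k : ℕ) :
    Real.sin (k * θ) + Real.sin ((k + 2 : ℕ) * θ) =
      2 * Real.cos θ * Real.sin ((k + 1 : ℕ) * θ) := by
  have hsub : (k : ℝ) * θ = (k + 1 : ℕ) * θ - θ := by push_cast; ring
  have hadd : ((k + 2 : ℕ) : ℝ) * θ = (k + 1 : ℕ) * θ + θ := by push_cast; ring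
  rw [hsub, hadd, Real.sin_sub, Real.sin_add]
  ring

/-- The Fan–Taussky–Todd inequality for antiperiodic sequences. -/
theorem sum_mul_succ_le_cos_mul_sum_sq {n : ℕ} (hn : 2 ≤ n) {y : ℕ → ℝ} (hy : y n = -y 0) :
    ∑ k ∈ Finset.range n, y k * y (k + 1) ≤
      Real.cos (Real.pi / n) * ∑ k ∈ Finset.range n, y k ^ 2 := by
  obtain ⟨p, rfl⟩ : ∃ p, n = p + 2 := ⟨n - 2, by omega⟩
  set θ := Real.pi / (p + 2 : ℕ)
  have hθ : ((p + 2 : ℕ) : ℝ) * θ = Real.pi := mul_div_cancel₀ _ (by positivity)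
  have hpos (k : ℕ) (hk : k ≤ p) : 0 < Real.sin ((k + 1 : ℕ) * θ) := by
    have hlt : ((k + 1 : ℕ) : ℝ) < (p + 2 : ℕ) := by exact_mod_cast (by omega : k + 1 < p + 2)
    have hθ₀ : 0 < θ := div_pos Real.pi_pos (by positivity)
    exact Real.sin_pos_of_pos_of_lt_pi (by positivity) (hθ ▸ mul_lt_mul_of_pos_right hlt hθ₀)
  have hlast : Real.sin ((p + 2 : ℕ) * θ) = 0 := by rw [hθ, Real.sin_pi]
  have hone : Real.sin ((1 : ℕ) * θ) = Real.sin ((p + 1 : ℕ) * θ) := by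
    rw [← Real.sin_pi_sub, ← hθ]
    congr 1
    push_cast
    ring
  have hle := le_sum_of_recurrence (s := fun k => Real.sin (k * θ)) (by simp)
    (sin_add_sin_add_two_mul θ) y p hpos
  have hrec := sin_add_sin_add_two_mul θ p
  simp only [hlast, hone, add_zero] at hle hrec
  have hbound : -2 * (y 0 * y (p + 1)) - 2 * Real.cos θ * y (p + 1) ^ 2 ≤
      2 * Real.cos θ * ∑ k ∈ Finset.range (p + 1), y k ^ 2 -
        2 * ∑ k ∈ Finset.range (p + 1), y k * y (k + 1) := by
    rw [Finset.mul_sum, Finset.mul_sum, ← Finset.sum_sub_distrib]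
    convert hle using 1
    have hS := (hpos p le_rfl).ne'
    rw [hrec]
    field_simp
    ring
  rw [Finset.sum_range_succ, Finset.sum_range_succ (fun k => y k ^ 2), hy]
  linarith

end FanTausskyTodd

section WeightedCycle

variable {n : ℕ} [NeZero n]

theorem add_one_eq_zero_of_val {i : Fin n} (hi : (i : ℕ) + 1 = n) : i + 1 = 0 := by
  obtain ⟨k, rfl⟩ := Nat.exists_eq_add_one_of_ne_zero (NeZero.ne n)
  have hlast : i = Fin.last k := Fin.ext (Nat.succ_injective hi)
  rw [hlast, Fin.last_add_one]

theorem cycleGraph_adj_add_one (hn : 2 ≤ n) (i : Fin n) :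
    (SimpleGraph.cycleGraph n).Adj i (i + 1) := by
  obtain ⟨k, rfl⟩ : ∃ k, n = k + 2 := ⟨n - 2, by omega⟩
  exact SimpleGraph.cycleGraph_adj.2 (Or.inr (add_sub_cancel_left i 1))

theorem add_one_add_one_ne_self (hn : 3 ≤ n) (i : Fin n) : i + 1 + 1 ≠ i := by
  obtain ⟨k, rfl⟩ : ∃ k, n = k + 3 := ⟨n - 3, by omega⟩
  rw [add_assoc, Ne, add_eq_left, Fin.ext_iff]
  simp [Fin.val_add, one_add_one_eq_two, Nat.mod_eq_of_lt (by omega : 2 < k + 3)]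

/-- The matrix whose only nonzero entries are the `b i` at `(i, i + 1)`, cyclically. -/
def cyclicShift (b : Fin n → ℝ) : Matrix (Fin n) (Fin n) ℝ :=
  of fun i j => if j = i + 1 then b i else 0

/-- The symmetric matrix supported on a cycle with constant diagonal `a` and with weight `b i` on
the edge from `i` to `i + 1`. -/
def weightedCycle (a : ℝ) (b : Fin n → ℝ) : Matrix (Fin n) (Fin n) ℝ :=
  Matrix.diagonal (fun _ => a) + cyclicShift b + (cyclicShift b)ᵀ

theorem isHermitian_weightedCycle (a : ℝ) (b : Fin n → ℝ) : (weightedCycle a b).IsHermitian := by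
  rw [IsHermitian, conjTranspose_eq_transpose_of_trivial, weightedCycle]
  simp only [transpose_add, diagonal_transpose, transpose_transpose]
  abel

theorem dotProduct_weightedCycle_mulVec (a : ℝ) (b x : Fin n → ℝ) :
    x ⬝ᵥ weightedCycle a b *ᵥ x = ∑ i, (a * x i ^ 2 + 2 * b i * (x i * x (i + 1))) := by
  have hshift : x ⬝ᵥ cyclicShift b *ᵥ x = ∑ i, b i * (x i * x (i + 1)) := by
    simp only [dotProduct, mulVec, cyclicShift, of_apply, ite_mul, zero_mul, Finset.sum_ite_eq',
      Finset.mem_univ, if_true, mul_left_comm]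
  have hdiag : x ⬝ᵥ Matrix.diagonal (fun _ => a) *ᵥ x = ∑ i, a * x i ^ 2 := by
    simp only [dotProduct, mulVec_diagonal, sq, mul_left_comm]
  rw [weightedCycle, add_mulVec, add_mulVec, dotProduct_add, dotProduct_add, mulVec_transpose,
    dotProduct_comm x (_ ᵥ* _), ← dotProduct_mulVec, hshift, hdiag, add_assoc,
    ← Finset.sum_add_distrib, ← Finset.sum_add_distrib]
  exact Finset.sum_congr rfl fun i _ => by ring

theorem weightedCycle_apply_of_not_adj (hn : 2 ≤ n) (a : ℝ) (b : Fin n → ℝ) {i j : Fin n}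
    (hij : i ≠ j) (h : ¬(SimpleGraph.cycleGraph n).Adj i j) : weightedCycle a b i j = 0 := by
  have hi : j ≠ i + 1 := fun hj => h (hj ▸ cycleGraph_adj_add_one hn i)
  have hj : i ≠ j + 1 := fun hi => h (hi ▸ (cycleGraph_adj_add_one hn j).symm)
  simp [weightedCycle, cyclicShift, hij, hi, hj]

theorem weightedCycle_map (hn : 3 ≤ n) (a : ℝ) (b : Fin n → ℝ) {f : ℝ → ℝ} (hf : f 0 = 0) :
    (weightedCycle a b).map f = weightedCycle (f a) (f ∘ b) := by
  have hne (i : Fin n) : i ≠ i + 1 := (cycleGraph_adj_add_one (by omega) i).ne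
  have hne₂ := add_one_add_one_ne_self hn
  ext i j
  simp only [weightedCycle, cyclicShift, map_apply, Matrix.add_apply, transpose_apply, of_apply,
    Function.comp_apply]
  rcases eq_or_ne i j with rfl | hij
  · simp [hne]
  rcases eq_or_ne j (i + 1) with rfl | hj
  · simp [hij, (hne₂ i).symm]
  rcases eq_or_ne i (j + 1) with rfl | hi
  · simp [hij, hj]
  · simp [hij, hi, hj, hf]

theorem posSemidef_weightedCycle (hn : 2 ≤ n) :
    (weightedCycle (2 * Real.cos (Real.pi / n))
      fun i : Fin n => if (i : ℕ) + 1 = n then 1 else -1).PosSemidef := by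
  refine .of_dotProduct_mulVec_nonneg (isHermitian_weightedCycle _ _) fun x => ?_
  rw [star_trivial, dotProduct_weightedCycle_mulVec]
  let y (k : ℕ) : ℝ := if h : k < n then x ⟨k, h⟩ else -x 0
  have hy (i : Fin n) : y i = x i := dif_pos i.isLt
  have hterm (i : Fin n) : 2 * (if (i : ℕ) + 1 = n then 1 else -1) * (x i * x (i + 1)) =
      -2 * (y i * y (i + 1)) := by
    rw [hy]
    split_ifs with hi
    · simp [y, hi, add_one_eq_zero_of_val hi]
    · have hval := Fin.val_add_one_of_lt' (by omega : (i : ℕ) + 1 < n)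
      rw [← hval, hy]
      ring
  have hfan := sum_mul_succ_le_cos_mul_sum_sq hn (y := y) (by simp [y, NeZero.pos n])
  rw [← Fin.sum_univ_eq_sum_range, ← Fin.sum_univ_eq_sum_range (fun k => y k ^ 2)] at hfan
  simp only [hterm, hy, Finset.sum_add_distrib, ← Finset.mul_sum] at hfan ⊢
  linarith

theorem neg_one_pow_val_add_one (heven : Even n) (i : Fin n) :
    (-1 : ℝ) ^ ((i + 1 : Fin n) : ℕ) = -(-1) ^ (i : ℕ) := by
  have hneg : -(-1 : ℝ) ^ (i : ℕ) = (-1) ^ ((i : ℕ) + 1) := by rw [pow_succ, mul_neg_one]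
  rw [hneg]
  by_cases hi : (i : ℕ) + 1 = n
  · rw [add_one_eq_zero_of_val hi, hi, Fin.val_zero, pow_zero, heven.neg_one_pow]
  · rw [Fin.val_add_one_of_lt' (by omega : (i : ℕ) + 1 < n)]

/-- On an even cycle `φ_α` makes all edge weights of `posSemidef_weightedCycle` equal to `1`; the
resulting matrix is tested on the alternating vector. -/
theorem two_le_two_mul_cos_rpow {α : ℝ} (hn : 3 ≤ n) (heven : Even n)
    (hα : α ∈ HsetPhi (SimpleGraph.cycleGraph n)) : 2 ≤ (2 * Real.cos (Real.pi / n)) ^ α := by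
  have hcos : 0 < 2 * Real.cos (Real.pi / n) := by
    have hn₂ : (2 : ℝ) < n := by exact_mod_cast hn
    have hlt : Real.pi / n < Real.pi / 2 :=
      div_lt_div_of_pos_left Real.pi_pos zero_lt_two hn₂
    have hpos : 0 < Real.pi / n := by positivity
    have hcos := Real.cos_pos_of_mem_Ioo (x := Real.pi / n) ⟨by linarith, hlt⟩
    positivity
  have hφ : phiF α (2 * Real.cos (Real.pi / n)) = (2 * Real.cos (Real.pi / n)) ^ α := by
    rw [phiF, if_neg hcos.ne', abs_of_pos hcos]
  have hone : (phiF α ∘ fun i : Fin n => if (i : ℕ) + 1 = n then 1 else -1) = 1 := by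
    ext i
    by_cases hi : (i : ℕ) + 1 = n <;> simp [phiF, hi]
  have hpsd := (hα _ ⟨posSemidef_weightedCycle (by omega), fun _ _ => mem_univ _,
    fun i j => weightedCycle_apply_of_not_adj (by omega) _ _⟩).1
  rw [weightedCycle_map hn _ _ (phiF_zero α), hφ, hone] at hpsd
  have hform := hpsd.dotProduct_mulVec_nonneg fun i => (-1) ^ (i : ℕ)
  have hpow (i : Fin n) : ((-1 : ℝ) ^ (i : ℕ)) * (-1) ^ (i : ℕ) = 1 := by
    rw [← mul_pow, neg_one_mul, neg_neg, one_pow]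
  simp only [star_trivial, dotProduct_weightedCycle_mulVec, neg_one_pow_val_add_one heven, sq,
    mul_neg, hpow, Pi.one_apply, mul_one, Finset.sum_const, Finset.card_univ, Fintype.card_fin,
    nsmul_eq_mul] at hform
  have hnpos : (0 : ℝ) < n := by exact_mod_cast NeZero.pos n
  linarith [nonneg_of_mul_nonneg_right hform hnpos]

end WeightedCycle

theorem HsetPhi_cycleGraph_four_subset : HsetPhi (SimpleGraph.cycleGraph 4) ⊆ Ici 2 := by
  intro α hα
  have h := two_le_two_mul_cos_rpow (by norm_num) (by decide) hα
  rw [Nat.cast_ofNat, Real.cos_pi_div_four, mul_div_cancel₀ _ two_ne_zero] at h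
  have hpow : √2 ^ (2 : ℝ) ≤ √2 ^ α := by
    rwa [Real.rpow_two, Real.sq_sqrt zero_le_two]
  exact (Real.rpow_le_rpow_left_iff (Real.lt_sqrt_of_sq_lt (by norm_num))).1 hpow

theorem one_notMem_HsetPhi_cycleGraph {n : ℕ} (hn : 3 ≤ n) (heven : Even n) :
    1 ∉ HsetPhi (SimpleGraph.cycleGraph n) := by
  intro h
  have : NeZero n := ⟨by omega⟩
  have hle := two_le_two_mul_cos_rpow hn heven h
  have hlt : Real.pi / n < Real.pi := div_lt_self Real.pi_pos (by exact_mod_cast (by omega : 1 < n))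
  have hcos : Real.cos (Real.pi / n) < Real.cos 0 :=
    Real.cos_lt_cos_of_nonneg_of_le_pi le_rfl hlt.le (by positivity)
  rw [Real.rpow_one] at hle
  rw [Real.cos_zero] at hcos
  linarith

theorem HsetG_cycleGraph {n : ℕ} (hn : 3 ≤ n) : HsetG (SimpleGraph.cycleGraph n) = Ici 1 := by
  have : NeZero n := ⟨by omega⟩
  refine (HsetG_subset_Ici_one (cycleGraph_adj_add_one (by omega) 0).symm
    (cycleGraph_adj_add_one (by omega) _) (add_one_add_one_ne_self hn 0).symm).antisymm ?_
  exact (Ici_subset_HsetPsi_cycleGraph hn).trans (HsetPsi_subset_HsetG _)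

theorem HsetPsi_cycleGraph {n : ℕ} (hn : 3 ≤ n) : HsetPsi (SimpleGraph.cycleGraph n) = Ici 1 :=
  (HsetG_cycleGraph hn ▸ HsetPsi_subset_HsetG _).antisymm (Ici_subset_HsetPsi_cycleGraph hn)

theorem Ici_two_subset_HsetPhi_cycleGraph {n : ℕ} (hn : 3 ≤ n) :
    Ici 2 ⊆ HsetPhi (SimpleGraph.cycleGraph n) := by
  intro α hα
  refine mem_HsetPhi_of_half_mem_HsetG ?_
  rw [HsetG_cycleGraph hn, mem_Ici]
  linarith [mem_Ici.1 hα]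

theorem eq_cycleGraph_of_adj_iff {n : ℕ} (hn : 2 ≤ n) {G : SimpleGraph (Fin n)}
    (hG : ∀ i j : Fin n, G.Adj i j ↔ i ≠ j ∧
      (((i : ℕ) : ZMod n) - ((j : ℕ) : ZMod n) = 1 ∨
        ((j : ℕ) : ZMod n) - ((i : ℕ) : ZMod n) = 1)) :
    G = SimpleGraph.cycleGraph n := by
  obtain ⟨k, rfl⟩ : ∃ k, n = k + 2 := ⟨n - 2, by omega⟩
  have hcast (i : Fin (k + 2)) : ((i : ℕ) : ZMod (k + 2)) = (i : Fin (k + 2)) :=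
    Fin.cast_val_eq_self i
  ext i j
  rw [hG, hcast, hcast, SimpleGraph.cycleGraph_adj]
  exact and_iff_right_of_imp fun h => (SimpleGraph.cycleGraph_adj.2 h).ne

/-- **Proposition 4.3 (cycles)**: for every cycle graph `C_n` (`n ≥ 3`, adjacency: difference
`±1 mod n`), `H_{C_n} = H_{C_n}^ψ = [1,∞)` and `H_{C_4}^φ = [2,∞)`; moreover for `n > 4`,
`[2,∞) ⊆ H_{C_n}^φ ⊆ [1,∞)`, with `1 ∉ H_{C_n}^φ` when `n` is even. -/
theorem Hsets_cycles :
    ∀ (n : ℕ), 3 ≤ n → ∀ G : SimpleGraph (Fin n),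
      (∀ i j : Fin n, G.Adj i j ↔ i ≠ j ∧
        (((i : ℕ) : ZMod n) - ((j : ℕ) : ZMod n) = 1 ∨
         ((j : ℕ) : ZMod n) - ((i : ℕ) : ZMod n) = 1)) →
      (HsetG G = Ici (1 : ℝ) ∧ HsetPsi G = Ici (1 : ℝ)) ∧
      (n = 4 → HsetPhi G = Ici (2 : ℝ)) ∧
      (4 < n → Ici (2 : ℝ) ⊆ HsetPhi G ∧ HsetPhi G ⊆ Ici (1 : ℝ) ∧
        (Even n → (1 : ℝ) ∉ HsetPhi G)) := by
  intro n hn G hG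
  obtain rfl := eq_cycleGraph_of_adj_iff (by omega) hG
  refine ⟨⟨HsetG_cycleGraph hn, HsetPsi_cycleGraph hn⟩, ?_, fun _ =>
    ⟨Ici_two_subset_HsetPhi_cycleGraph hn, ?_, one_notMem_HsetPhi_cycleGraph hn⟩⟩
  · rintro rfl
    exact HsetPhi_cycleGraph_four_subset.antisymm (Ici_two_subset_HsetPhi_cycleGraph hn)
  · rw [← HsetG_cycleGraph hn]
    exact HsetPhi_subset_HsetG _
end
end
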